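/- Fix a connected stable weighted graph (Γ, w) of genus g with n labeled legs and edge set E = E(Γ). On the compact cube [0, ∞]^E (where [0, ∞] = ℝ≥0 ∪ {∞} carries its standard compact topology, in which neighborhoods of ∞ are complements of compact subsets of ℝ≥0) define p ∼ q if and only if the extended n-pointed metric weighted graphs associated to p and q are isomorphic. Then the quotient space [0, ∞]^E / ∼, with the quotient topology, is a compact Hausdorff topological space. -/

import Mathlib

/-!
The cube `[0, ∞]^E` is compact Hausdorff, so its quotient is compact, and it is Hausdorff as
soon as the equivalence relation is closed (`t2Space_quot_of_isClosed`).

The relation is a finite union, over pairs of edge sets `S`, `T` and isomorphisms of weighted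
graphs `φ : Γ/S ≅ Γ/T`, of the sets of pairs `(p, q)` for which `p` vanishes on `S`, `q` vanishes
on `T`, and `φ` preserves edge lengths (`ptRel_iff`). No positivity is asked of the lengths of
the surviving edges, so these sets are closed. The point is that all their elements really are
related: if more edges degenerate, the zero sets `S' ⊇ S` of `p` and `T' ⊇ T` of `q` correspond
under `φ`, and `φ` descends to an isomorphism `Γ/S' ≅ Γ/T'` of weighted graphs
(`CIso.desc`, `CIso.desc_weight`).

That the descended map preserves weights is the functoriality of the weighted contraction
(`cweight_trans`): `w/S'` depends only on `Γ/S`, on `w/S` and on the image of `S'` in `Γ/S`. This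
is additivity of Euler characteristics over the fibers of `Γ/S → Γ/S'`, the fibers of a
contraction being connected. Connectedness also gives `|V| ≤ |E| + 1`, so the
natural-number subtraction in `b1` does not truncate.
-/

open scoped ENNReal NNReal Classical

/-- A combinatorial graph with `n` labeled legs: a finite nonempty set `V` of vertices, a
finite set `H` of half-edges, an involution `ι` on `H` whose fixed points are exactly the
`n` labeled legs, and an endpoint map `ε : H → V`.  Edges are the pairs `{h, ι h}` with
`ι h ≠ h`. -/
structure LeggedGraph (n : ℕ) where
  V : Type
  H : Type
  finV : Finite V
  finH : Finite H
  neV : Nonempty V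
  ι : H → H
  ι_invol : ∀ h, ι (ι h) = h
  ε : H → V
  leg : Fin n → H
  leg_fix : ∀ i, ι (leg i) = leg i
  leg_inj : Function.Injective leg
  fix_leg : ∀ h, ι h = h → ∃ i, leg i = h

attribute [instance] LeggedGraph.finV LeggedGraph.finH LeggedGraph.neV

namespace LeggedGraph

variable {n : ℕ}

/-- The type of edges of `G`: unordered pairs `{h, ι h}` with `ι h ≠ h`. -/
def Edge (G : LeggedGraph n) : Type :=
  Quot (fun h h' : {h : G.H // G.ι h ≠ h} => (h' : G.H) = G.ι (h : G.H))

/-- The edge determined by a non-fixed half-edge. -/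
def edgeMk (G : LeggedGraph n) (h : G.H) (hne : G.ι h ≠ h) : G.Edge := Quot.mk _ ⟨h, hne⟩

/-- The number of edges of `G`. -/
noncomputable def numEdges (G : LeggedGraph n) : ℕ := Nat.card G.Edge

/-- Two vertices are adjacent if they are the two endpoints of some edge. -/
def adjRel (G : LeggedGraph n) : G.V → G.V → Prop := fun v v' =>
  ∃ h, G.ι h ≠ h ∧ G.ε h = v ∧ G.ε (G.ι h) = v'

/-- The number of connected components of `G`. -/
noncomputable def numComps (G : LeggedGraph n) : ℕ := Nat.card (Quot G.adjRel)

/-- `G` is connected: any two vertices can be joined by an edge path. -/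
def IsConnected (G : LeggedGraph n) : Prop := ∀ v v' : G.V, Relation.EqvGen G.adjRel v v'

/-- The first Betti number `b₁(G) = |E(G)| − |V(G)| + c`, where `c` is the number of
connected components (stated as `|E(G)| + c − |V(G)|`, a natural number). -/
noncomputable def b1 (G : LeggedGraph n) : ℕ := G.numEdges + G.numComps - Nat.card G.V

/-- The valence of a vertex: the number of half-edges based at it (a loop counts twice,
legs count once). -/
noncomputable def valence (G : LeggedGraph n) (v : G.V) : ℕ := Nat.card {h : G.H // G.ε h = v}

/-- `G` is 3-regular if every vertex has valence `3`. -/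
def ThreeRegular (G : LeggedGraph n) : Prop := ∀ v, G.valence v = 3

/-- The genus of the weighted graph `(G, w)`: `b₁(G) + Σ_v w(v)`. -/
noncomputable def genus (G : LeggedGraph n) (w : G.V → ℕ) : ℕ := G.b1 + ∑ᶠ v, w v

/-- Stability of a weighted graph: every vertex of weight `0` has valence at least `3` and
every vertex of weight `1` has valence at least `1`. -/
def Stable (G : LeggedGraph n) (w : G.V → ℕ) : Prop :=
  ∀ v, (w v = 0 → 3 ≤ G.valence v) ∧ (w v = 1 → 1 ≤ G.valence v)

/-- The set of half-edges of the edges meeting a set `S` of half-edges: this is the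
set of half-edges of the edge set determined by `S` (legs and fixed half-edges are
discarded, and the set is closed under the involution). -/
def sym (G : LeggedGraph n) (S : Set G.H) : Set G.H :=
  {h | (h ∈ S ∨ G.ι h ∈ S) ∧ G.ι h ≠ h}

theorem sym_iota_mem {G : LeggedGraph n} {S : Set G.H} {h : G.H} (hh : h ∈ G.sym S) :
    G.ι h ∈ G.sym S := by
  obtain ⟨h1, h2⟩ := hh
  constructor
  · rcases h1 with h1 | h1
    · right; rwa [G.ι_invol]
    · left; exact h1
  · rw [G.ι_invol]
    exact fun e => h2 e.symm

theorem sym_iota_not_mem {G : LeggedGraph n} {S : Set G.H} {h : G.H} (hh : h ∉ G.sym S) :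
    G.ι h ∉ G.sym S := fun hc => by
  have h2 := sym_iota_mem hc
  rw [G.ι_invol] at h2
  exact hh h2

/-- The relation identifying the two endpoints of every edge in `S`. -/
def contrRel (G : LeggedGraph n) (S : Set G.H) : G.V → G.V → Prop := fun v v' =>
  ∃ h ∈ G.sym S, G.ε h = v ∧ G.ε (G.ι h) = v'

/-- The contraction `Γ/S` of the set of edges `S`: its vertices are the connected
components of the graph obtained by removing all edges not in `S`, its half-edges are the
half-edges not belonging to `S`, and legs are kept. -/
def contract (G : LeggedGraph n) (S : Set G.H) : LeggedGraph n where
  V := Quot (G.contrRel S)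
  H := {h : G.H // h ∉ G.sym S}
  finV := inferInstance
  finH := inferInstance
  neV := G.neV.map (Quot.mk _)
  ι := fun h => ⟨G.ι h.1, sym_iota_not_mem h.2⟩
  ι_invol := fun h => Subtype.ext (G.ι_invol h.1)
  ε := fun h => Quot.mk _ (G.ε h.1)
  leg := fun i => ⟨G.leg i, fun hc => hc.2 (G.leg_fix i)⟩
  leg_fix := fun i => Subtype.ext (G.leg_fix i)
  leg_inj := fun i j hij => G.leg_inj (congrArg Subtype.val hij)
  fix_leg := fun h hh => by
    obtain ⟨i, hi⟩ := G.fix_leg h.1 (congrArg Subtype.val hh)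
    exact ⟨i, Subtype.ext hi⟩

/-- The graph `Γ − T` obtained from `G` by keeping only the edges in `S` (and keeping all
vertices and all legs). -/
def restrict (G : LeggedGraph n) (S : Set G.H) : LeggedGraph n where
  V := G.V
  H := {h : G.H // h ∈ G.sym S ∨ ∃ i, G.leg i = h}
  finV := G.finV
  finH := inferInstance
  neV := G.neV
  ι := fun h => ⟨G.ι h.1, by
    rcases h.2 with hm | ⟨i, hi⟩
    · exact Or.inl (sym_iota_mem hm)
    · refine Or.inr ⟨i, ?_⟩
      rw [← hi]
      exact (G.leg_fix i).symm⟩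
  ι_invol := fun h => Subtype.ext (G.ι_invol h.1)
  ε := fun h => G.ε h.1
  leg := fun i => ⟨G.leg i, Or.inr ⟨i, rfl⟩⟩
  leg_fix := fun i => Subtype.ext (G.leg_fix i)
  leg_inj := fun i j hij => G.leg_inj (congrArg Subtype.val hij)
  fix_leg := fun h hh => by
    rcases h.2 with hm | ⟨i, hi⟩
    · exact absurd (congrArg Subtype.val hh) hm.2
    · exact ⟨i, Subtype.ext hi⟩

/-- The subgraph of `Γ − T` lying over a vertex `x` of the contraction `Γ/S`
(the fiber `σ⁻¹(x)` of the contraction map `σ`), viewed as a graph without legs. -/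
def fiber (G : LeggedGraph n) (S : Set G.H) (x : Quot (G.contrRel S)) : LeggedGraph 0 where
  V := {v : G.V // Quot.mk (G.contrRel S) v = x}
  H := {h : G.H // h ∈ G.sym S ∧ Quot.mk (G.contrRel S) (G.ε h) = x}
  finV := inferInstance
  finH := inferInstance
  neV := by
    obtain ⟨v, hv⟩ := Quot.exists_rep x
    exact ⟨⟨v, hv⟩⟩
  ι := fun h => ⟨G.ι h.1, sym_iota_mem h.2.1, by
    have h2 : Quot.mk (G.contrRel S) (G.ε h.1) = Quot.mk (G.contrRel S) (G.ε (G.ι h.1)) :=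
      Quot.sound ⟨h.1, h.2.1, rfl, rfl⟩
    rw [← h2]
    exact h.2.2⟩
  ι_invol := fun h => Subtype.ext (G.ι_invol h.1)
  ε := fun h => ⟨G.ε h.1, h.2.2⟩
  leg := Fin.elim0
  leg_fix := fun i => i.elim0
  leg_inj := fun i => i.elim0
  fix_leg := fun h hh => absurd (congrArg Subtype.val hh) h.2.1.2

/-- The weight function `w/S` of the weighted contraction of `(G, w)`:
`w/S(x) = b₁(σ⁻¹(x)) + Σ_{v ∈ σ⁻¹(x)} w(v)`. -/
noncomputable def wcontract (G : LeggedGraph n) (w : G.V → ℕ) (S : Set G.H) :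
    (G.contract S).V → ℕ := fun x =>
  (G.fiber S x).b1 + ∑ᶠ v : {v : G.V // Quot.mk (G.contrRel S) v = x}, w v.1

/-- Isomorphism of graphs with `n` labeled legs. -/
def GIso (G G' : LeggedGraph n) : Prop :=
  ∃ (fV : G.V ≃ G'.V) (fH : G.H ≃ G'.H),
    (∀ h, fH (G.ι h) = G'.ι (fH h)) ∧
    (∀ h, fV (G.ε h) = G'.ε (fH h)) ∧
    (∀ i, fH (G.leg i) = G'.leg i)

/-- Isomorphism of weighted graphs with `n` labeled legs. -/
def WIso (G : LeggedGraph n) (w : G.V → ℕ) (G' : LeggedGraph n) (w' : G'.V → ℕ) : Prop :=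
  ∃ (fV : G.V ≃ G'.V) (fH : G.H ≃ G'.H),
    (∀ h, fH (G.ι h) = G'.ι (fH h)) ∧
    (∀ h, fV (G.ε h) = G'.ε (fH h)) ∧
    (∀ i, fH (G.leg i) = G'.leg i) ∧
    (∀ v, w' (fV v) = w v)

/-- Isomorphism of metric weighted graphs with `n` labeled legs (lengths take values in
`ℝ≥0 ∪ {∞}`, realized as `ℝ≥0∞`). -/
def MIso (G : LeggedGraph n) (w : G.V → ℕ) (l : G.H → ℝ≥0∞)
    (G' : LeggedGraph n) (w' : G'.V → ℕ) (l' : G'.H → ℝ≥0∞) : Prop :=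
  ∃ (fV : G.V ≃ G'.V) (fH : G.H ≃ G'.H),
    (∀ h, fH (G.ι h) = G'.ι (fH h)) ∧
    (∀ h, fV (G.ε h) = G'.ε (fH h)) ∧
    (∀ i, fH (G.leg i) = G'.leg i) ∧
    (∀ v, w' (fV v) = w v) ∧
    (∀ h, l' (fH h) = l h)

/-- `G'` is obtained from `G` by contracting exactly one edge, which is not a loop. -/
def OneEdgeContr (G G' : LeggedGraph n) : Prop :=
  ∃ h₀ : G.H, G.ι h₀ ≠ h₀ ∧ G.ε (G.ι h₀) ≠ G.ε h₀ ∧ GIso (G.contract {h₀}) G'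

/-- `(G', w')` is obtained from `(G, w)` by the weighted contraction of exactly one edge. -/
def OneEdgeWContr (G : LeggedGraph n) (w : G.V → ℕ) (G' : LeggedGraph n)
    (w' : G'.V → ℕ) : Prop :=
  ∃ h₀ : G.H, G.ι h₀ ≠ h₀ ∧ WIso (G.contract {h₀}) (G.wcontract w {h₀}) G' w'

/-- The set of half-edges of the edges given length `0` by a point `p` of the cone. -/
def zeroSet (G : LeggedGraph n) (p : G.Edge → ℝ≥0∞) : Set G.H :=
  {h | ∃ hne : G.ι h ≠ h, p (G.edgeMk h hne) = 0}

/-- The length function of the metric weighted graph associated to a point `p` of the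
cone: each surviving edge `e` gets length `p e`, and each leg gets length `∞`. -/
noncomputable def assocLen (G : LeggedGraph n) (p : G.Edge → ℝ≥0∞)
    (h : {h : G.H // h ∉ G.sym (G.zeroSet p)}) : ℝ≥0∞ :=
  if hne : G.ι h.1 = h.1 then ⊤ else p (G.edgeMk h.1 hne)

/-- `p ∼ q`: the metric weighted graphs associated to the points `p` and `q` are
isomorphic. -/
def ptRel (G : LeggedGraph n) (w : G.V → ℕ) (p q : G.Edge → ℝ≥0∞) : Prop :=
  MIso (G.contract (G.zeroSet p)) (G.wcontract w (G.zeroSet p)) (G.assocLen p)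
       (G.contract (G.zeroSet q)) (G.wcontract w (G.zeroSet q)) (G.assocLen q)

/-- The equivalence on the closed cone `ℝ≥0^E`. -/
def ptRelNN (G : LeggedGraph n) (w : G.V → ℕ) (p q : G.Edge → ℝ≥0) : Prop :=
  G.ptRel w (fun e => (p e : ℝ≥0∞)) (fun e => (q e : ℝ≥0∞))

end LeggedGraph

open LeggedGraph

namespace LeggedGraph

/-! ### Betti numbers and weights of contractions -/

section Weights

variable {n : ℕ}

theorem edgeMk_eq_imp {G : LeggedGraph n} {a b : {h : G.H // G.ι h ≠ h}}
    (hab : G.edgeMk a.1 a.2 = G.edgeMk b.1 b.2) : b = a ∨ b.1 = G.ι a.1 := by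
  have key := Quot.eqvGen_exact (show Quot.mk _ a = Quot.mk _ b from hab)
  clear hab
  induction key with
  | rel x y hxy => exact Or.inr hxy
  | refl x => exact Or.inl rfl
  | symm x y _ ih =>
    rcases ih with ih | ih
    · exact Or.inl ih.symm
    · exact Or.inr (by rw [ih, G.ι_invol])
  | trans x y z _ _ ih1 ih2 =>
    rcases ih1 with rfl | ih1
    · exact ih2
    · rcases ih2 with rfl | ih2
      · exact Or.inr ih1
      · exact Or.inl (Subtype.ext (by rw [ih2, ih1, G.ι_invol]))

theorem edgeMk_iota {G : LeggedGraph n} {a b : G.H} (ha : G.ι a ≠ a) (hb : G.ι b ≠ b)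
    (hab : b = G.ι a) : G.edgeMk a ha = G.edgeMk b hb :=
  Quot.sound hab

instance finite_edge (G : LeggedGraph n) : Finite G.Edge :=
  inferInstanceAs (Finite (Quot _))

theorem two_mul_numEdges (G : LeggedGraph n) :
    2 * G.numEdges = Nat.card {h : G.H // G.ι h ≠ h} := by
  have := Fintype.ofFinite G.H
  have := Fintype.ofFinite G.Edge
  have hcard := Finset.card_eq_sum_card_fiberwise
    (s := (Finset.univ : Finset {h : G.H // G.ι h ≠ h})) (t := (Finset.univ : Finset G.Edge))
    (f := fun h => G.edgeMk h.1 h.2) (fun _ _ => Finset.mem_coe.2 (Finset.mem_univ _))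
  have hfib : ∀ e : G.Edge, (Finset.univ.filter
      (fun h : {h : G.H // G.ι h ≠ h} => G.edgeMk h.1 h.2 = e)).card = 2 := by
    intro e
    obtain ⟨a, rfl⟩ : ∃ a : {h : G.H // G.ι h ≠ h}, G.edgeMk a.1 a.2 = e := Quot.exists_rep e
    have hb : G.ι (G.ι a.1) ≠ G.ι a.1 := by rw [G.ι_invol]; exact a.2.symm
    have : Finset.univ.filter (fun h : {h : G.H // G.ι h ≠ h} =>
        G.edgeMk h.1 h.2 = G.edgeMk a.1 a.2) = {a, ⟨G.ι a.1, hb⟩} := by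
      ext h
      simp only [Finset.mem_filter, Finset.mem_univ, true_and, Finset.mem_insert,
        Finset.mem_singleton]
      constructor
      · intro hh
        rcases edgeMk_eq_imp hh.symm with h1 | h1
        · exact Or.inl h1
        · exact Or.inr (Subtype.ext h1)
      · rintro (rfl | rfl)
        · rfl
        · exact (edgeMk_iota a.2 hb rfl).symm
    rw [this, Finset.card_pair]
    intro hc
    exact a.2 (congrArg Subtype.val hc).symm
  simp only [hfib] at hcard
  rw [Nat.card_eq_fintype_card, numEdges, Nat.card_eq_fintype_card,
    ← Finset.card_univ (α := {h : G.H // G.ι h ≠ h}), hcard]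
  simp [mul_comm]

/-- A connected graph has at most one more vertex than it has edges, so the truncated
subtraction in `b1` is harmless. -/
theorem card_le_numEdges (G : LeggedGraph n) (hG : G.IsConnected) :
    Nat.card G.V ≤ G.numEdges + 1 := by
  set Γ : SimpleGraph G.V := SimpleGraph.fromRel G.adjRel with hΓ
  have hreach : ∀ v v', Γ.Reachable v v' := by
    intro v v'
    induction hG v v' with
    | rel x y hxy =>
      by_cases hne : x = y
      · subst hne; exact SimpleGraph.Reachable.refl _
      · exact SimpleGraph.Adj.reachable ((SimpleGraph.fromRel_adj _ _ _).2 ⟨hne, Or.inl hxy⟩)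
    | refl x => exact SimpleGraph.Reachable.refl _
    | symm x y _ ih => exact ih.symm
    | trans x y z _ _ ih1 ih2 => exact ih1.trans ih2
  have hconn : Γ.Connected := { preconnected := hreach, nonempty := G.neV }
  have h1 := hconn.card_vert_le_card_edgeSet_add_one
  let ends : G.Edge → Sym2 G.V := Quot.lift (fun h => s(G.ε h.1, G.ε (G.ι h.1))) (by
    intro a b hab
    simp only [hab, G.ι_invol]
    exact Sym2.eq_swap)
  have hsub : Γ.edgeSet ⊆ Set.range ends := by
    intro e
    induction e using Sym2.ind with
    | _ x y =>
      intro he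
      rw [SimpleGraph.mem_edgeSet, hΓ, SimpleGraph.fromRel_adj] at he
      rcases he.2 with ⟨h, hne, h1, h2⟩ | ⟨h, hne, h1, h2⟩
      · exact ⟨G.edgeMk h hne, by rw [← h1, ← h2]; rfl⟩
      · exact ⟨G.edgeMk h hne, by rw [← h1, ← h2, Sym2.eq_swap]; rfl⟩
  have h2 : Nat.card Γ.edgeSet ≤ G.numEdges :=
    (Nat.card_mono (Set.finite_range ends) hsub).trans
      (Finite.card_range_le ends)
  omega

theorem fiber_connected (G : LeggedGraph n) (S : Set G.H) (x : Quot (G.contrRel S)) :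
    (G.fiber S x).IsConnected := by
  have key : ∀ v v' : G.V, Relation.EqvGen (G.contrRel S) v v' →
      ∀ (hv : Quot.mk (G.contrRel S) v = x) (hv' : Quot.mk (G.contrRel S) v' = x),
        Relation.EqvGen (G.fiber S x).adjRel ⟨v, hv⟩ ⟨v', hv'⟩ := by
    intro v v' h
    induction h with
    | rel a b hab =>
      intro hv hv'
      obtain ⟨h, hS, h1, h2⟩ := hab
      refine Relation.EqvGen.rel _ _ ⟨⟨h, hS, by rw [h1]; exact hv⟩, ?_, ?_, ?_⟩
      · exact fun hc => hS.2 (congrArg Subtype.val hc)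
      · exact Subtype.ext h1
      · exact Subtype.ext h2
    | refl a => intro hv hv'; exact Relation.EqvGen.refl _
    | symm a b _ ih => intro hv hv'; exact (ih hv' hv).symm
    | trans a b c hab _ ih1 ih2 =>
      intro hv hv'
      have hb : Quot.mk (G.contrRel S) b = x := (Quot.eqvGen_sound hab).symm.trans hv
      exact (ih1 hv hb).trans _ _ _ (ih2 hb hv')
  intro v v'
  exact key _ _ (Quot.eqvGen_exact (v.2.trans v'.2.symm)) _ _

/-- The contracted weight `w/S`, as a function on the quotient of the vertex set that
underlies the vertex set of `Γ/S`. -/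
noncomputable def cweight (G : LeggedGraph n) (w : G.V → ℕ) (S : Set G.H)
    (x : Quot (G.contrRel S)) : ℕ := G.wcontract w S x

/-- The defining formula of the contracted weight, cleared of subtractions and with edges
counted by half-edges: `2 w/S(x) + 2 #V(x) = #H(x) + 2 + 2 ∑ w`. -/
theorem cweight_formula (G : LeggedGraph n) [Fintype G.V] [Fintype G.H] (w : G.V → ℕ)
    (S : Set G.H) (x : Quot (G.contrRel S)) :
    2 * G.cweight w S x + 2 * (Finset.univ.filter fun v => Quot.mk (G.contrRel S) v = x).card
      = (Finset.univ.filter fun h => h ∈ G.sym S ∧ Quot.mk (G.contrRel S) (G.ε h) = x).card + 2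
        + 2 * ∑ v with Quot.mk (G.contrRel S) v = x, w v := by
  have hc := fiber_connected G S x
  have hle := card_le_numEdges _ hc
  have hcomp : (G.fiber S x).numComps = 1 := by
    rw [numComps, Nat.card_eq_one_iff_unique]
    constructor
    · constructor
      intro a b
      induction a using Quot.ind
      induction b using Quot.ind
      exact Quot.eqvGen_sound (hc _ _)
    · exact (G.fiber S x).neV.map (Quot.mk _)
  have hE := two_mul_numEdges (G.fiber S x)
  have hH : Nat.card {h : (G.fiber S x).H // (G.fiber S x).ι h ≠ h} =
      (Finset.univ.filter fun h => h ∈ G.sym S ∧ Quot.mk (G.contrRel S) (G.ε h) = x).card := by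
    have h1 : Nat.card {h : (G.fiber S x).H // (G.fiber S x).ι h ≠ h} =
        Nat.card {h : G.H // h ∈ G.sym S ∧ Quot.mk (G.contrRel S) (G.ε h) = x} :=
      Nat.card_congr (Equiv.subtypeUnivEquiv
        (fun h hc => h.2.1.2 (congrArg Subtype.val hc)))
    rw [h1, Nat.card_eq_fintype_card, Fintype.card_subtype]
  have hV : Nat.card (G.fiber S x).V =
      (Finset.univ.filter fun v => Quot.mk (G.contrRel S) v = x).card := by
    change Nat.card {v : G.V // Quot.mk (G.contrRel S) v = x} = _
    rw [Nat.card_eq_fintype_card, Fintype.card_subtype]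
  have hW : ∑ᶠ v : {v : G.V // Quot.mk (G.contrRel S) v = x}, w v.1 =
      ∑ v with Quot.mk (G.contrRel S) v = x, w v := by
    rw [finsum_eq_sum_of_fintype]
    exact (Finset.sum_subtype _ (by simp) w).symm
  rw [hH] at hE
  rw [hV] at hle
  have hdef : G.cweight w S x = (G.fiber S x).numEdges + 1 -
      (Finset.univ.filter fun v => Quot.mk (G.contrRel S) v = x).card +
      ∑ v with Quot.mk (G.contrRel S) v = x, w v := by
    rw [← hW, ← hV, ← hcomp]; rfl
  omega

/-- The projection `Γ/S → Γ/S'` on vertices, for edge sets `S ⊆ S'`. -/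
def contrMap {G : LeggedGraph n} {S S' : Set G.H} (hS : G.sym S ⊆ G.sym S') :
    Quot (G.contrRel S) → Quot (G.contrRel S') :=
  Quot.map id (fun _ _ ⟨h, h1, h2⟩ => ⟨h, hS h1, h2⟩)

/-- Functoriality of the weighted contraction: for `S ⊆ S'`, the weight `w/S'` is computed
from `Γ/S` and `w/S` by contracting the edges of `S' ∖ S`. -/
theorem cweight_trans (G : LeggedGraph n) [Fintype G.V] [Fintype G.H] (w : G.V → ℕ)
    {S S' : Set G.H} [Fintype (Quot (G.contrRel S))] (hS : G.sym S ⊆ G.sym S')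
    (x : Quot (G.contrRel S')) :
    2 * G.cweight w S' x + 2 * (Finset.univ.filter fun y => contrMap hS y = x).card
      = (Finset.univ.filter fun h : {h : G.H // h ∉ G.sym S} =>
          h.1 ∈ G.sym S' ∧ Quot.mk (G.contrRel S') (G.ε h.1) = x).card + 2
        + 2 * ∑ y with contrMap hS y = x, G.cweight w S y := by
  have hx := cweight_formula G w S' x
  have hsum : 2 * ∑ y with contrMap hS y = x, G.cweight w S y +
      2 * ∑ y with contrMap hS y = x,
        (Finset.univ.filter fun v => Quot.mk (G.contrRel S) v = y).card =
      ∑ y with contrMap hS y = x,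
        (Finset.univ.filter fun h => h ∈ G.sym S ∧ Quot.mk (G.contrRel S) (G.ε h) = y).card +
      (Finset.univ.filter fun y => contrMap hS y = x).card * 2 +
      2 * ∑ y with contrMap hS y = x, ∑ v with Quot.mk (G.contrRel S) v = y, w v := by
    rw [Finset.mul_sum, Finset.mul_sum, Finset.mul_sum, Finset.card_eq_sum_ones, Finset.sum_mul,
      ← Finset.sum_add_distrib, ← Finset.sum_add_distrib, ← Finset.sum_add_distrib]
    exact Finset.sum_congr rfl (fun y _ => cweight_formula G w S y)
  have hV : (Finset.univ.filter fun v => Quot.mk (G.contrRel S') v = x).card =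
      ∑ y with contrMap hS y = x,
        (Finset.univ.filter fun v => Quot.mk (G.contrRel S) v = y).card := by
    rw [Finset.card_eq_sum_card_fiberwise (f := Quot.mk (G.contrRel S))
      (t := Finset.univ.filter fun y => contrMap hS y = x)]
    · refine Finset.sum_congr rfl fun y hy => ?_
      congr 1
      ext v
      simp only [Finset.mem_filter, Finset.mem_univ, true_and] at hy ⊢
      constructor
      · exact fun h => h.2
      · rintro rfl; exact ⟨hy, rfl⟩
    · intro v hv
      exact Finset.mem_coe.2 (Finset.mem_filter.2
        ⟨Finset.mem_univ _, (Finset.mem_filter.1 hv).2⟩)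
  have hW : ∑ v with Quot.mk (G.contrRel S') v = x, w v =
      ∑ y with contrMap hS y = x, ∑ v with Quot.mk (G.contrRel S) v = y, w v := by
    rw [← Finset.sum_fiberwise_of_maps_to (g := Quot.mk (G.contrRel S))
      (t := Finset.univ.filter fun y => contrMap hS y = x)]
    · refine Finset.sum_congr rfl fun y hy => ?_
      refine Finset.sum_congr ?_ fun _ _ => rfl
      ext v
      simp only [Finset.mem_filter, Finset.mem_univ, true_and] at hy ⊢
      constructor
      · exact fun h => h.2
      · rintro rfl; exact ⟨hy, rfl⟩
    · intro v hv
      exact Finset.mem_coe.2 (Finset.mem_filter.2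
        ⟨Finset.mem_univ _, (Finset.mem_filter.1 hv).2⟩)
  have hH : (Finset.univ.filter fun h =>
        h ∈ G.sym S' ∧ Quot.mk (G.contrRel S') (G.ε h) = x).card =
      (Finset.univ.filter fun h : {h : G.H // h ∉ G.sym S} =>
          h.1 ∈ G.sym S' ∧ Quot.mk (G.contrRel S') (G.ε h.1) = x).card +
      ∑ y with contrMap hS y = x,
        (Finset.univ.filter fun h => h ∈ G.sym S ∧ Quot.mk (G.contrRel S) (G.ε h) = y).card := by
    rw [← Finset.card_filter_add_card_filter_not (fun h => h ∉ G.sym S)]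
    congr 1
    · rw [← Finset.card_map (Function.Embedding.subtype _)]
      congr 1
      ext h
      simp only [Finset.mem_filter, Finset.mem_univ, true_and, Finset.mem_map,
        Function.Embedding.coe_subtype, Subtype.exists, exists_and_right, exists_eq_right]
      tauto
    · rw [Finset.card_eq_sum_card_fiberwise (f := fun h => Quot.mk (G.contrRel S) (G.ε h))
        (t := Finset.univ.filter fun y => contrMap hS y = x)]
      · refine Finset.sum_congr rfl fun y hy => ?_
        congr 1
        ext h
        simp only [Finset.mem_filter, Finset.mem_univ, true_and, not_not] at hy ⊢
        constructor
        · exact fun h => ⟨h.1.2, h.2⟩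
        · rintro ⟨h1, rfl⟩; exact ⟨⟨⟨hS h1, hy⟩, h1⟩, rfl⟩
      · intro h hh
        exact Finset.mem_coe.2 (Finset.mem_filter.2
          ⟨Finset.mem_univ _, (Finset.mem_filter.1 (Finset.mem_filter.1 hh).1).2.2⟩)
  rw [← hV, ← hW] at hsum
  omega

end Weights
end LeggedGraph
namespace LeggedGraph

/-! ### Isomorphisms between contractions -/

section Isos

variable {n : ℕ}

/-- An isomorphism of legged graphs `Γ/S ≅ Γ/T`, as data. -/
structure CIso (G : LeggedGraph n) (S T : Set G.H) where
  fV : Quot (G.contrRel S) ≃ Quot (G.contrRel T)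
  fH : {h : G.H // h ∉ G.sym S} ≃ {h : G.H // h ∉ G.sym T}
  hι : ∀ h, (fH ⟨G.ι h.1, sym_iota_not_mem h.2⟩).1 = G.ι (fH h).1
  hε : ∀ h, fV (Quot.mk _ (G.ε h.1)) = Quot.mk _ (G.ε (fH h).1)
  hleg : ∀ i, (fH ⟨G.leg i, fun hc => hc.2 (G.leg_fix i)⟩).1 = G.leg i

namespace CIso

variable {G : LeggedGraph n} {S T S' T' : Set G.H}

instance : Finite (G.CIso S T) :=
  Finite.of_injective (fun φ : G.CIso S T => (φ.fV, φ.fH)) (by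
    rintro ⟨a, b, _, _, _⟩ ⟨a', b', _, _, _⟩ h
    cases h
    rfl)

/-- The inverse isomorphism. -/
def symm (φ : G.CIso S T) : G.CIso T S where
  fV := φ.fV.symm
  fH := φ.fH.symm
  hι := fun h => by
    have h1 : φ.fH ⟨G.ι (φ.fH.symm h).1, sym_iota_not_mem (φ.fH.symm h).2⟩ =
        ⟨G.ι h.1, sym_iota_not_mem h.2⟩ := Subtype.ext (by rw [φ.hι]; simp)
    rw [← h1]; simp
  hε := fun h => by
    rw [Equiv.symm_apply_eq, φ.hε]; simp
  hleg := fun i => by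
    have h1 : φ.fH ⟨G.leg i, fun hc => hc.2 (G.leg_fix i)⟩ =
        ⟨G.leg i, fun hc => hc.2 (G.leg_fix i)⟩ := Subtype.ext (φ.hleg i)
    rw [← h1]; simp

/-- `φ : Γ/S ≅ Γ/T` matches the edges of `S' ⊇ S` with those of `T' ⊇ T`. -/
structure Matches (φ : G.CIso S T) (S' T' : Set G.H) : Prop where
  hS : G.sym S ⊆ G.sym S'
  hT : G.sym T ⊆ G.sym T'
  hmem : ∀ h, h.1 ∈ G.sym S' ↔ (φ.fH h).1 ∈ G.sym T'

theorem Matches.symm {φ : G.CIso S T} (m : φ.Matches S' T') : φ.symm.Matches T' S' where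
  hS := m.hT
  hT := m.hS
  hmem := fun h => by
    rw [m.hmem (φ.symm.fH h)]
    simp [CIso.symm]

/-- The map on vertices `Γ/S' → Γ/T'` induced by `φ : Γ/S ≅ Γ/T`. -/
def descV (φ : G.CIso S T) (m : φ.Matches S' T') :
    Quot (G.contrRel S') → Quot (G.contrRel T') :=
  Quot.lift (fun v => contrMap m.hT (φ.fV (Quot.mk _ v))) (by
    rintro a b ⟨h, h1, rfl, rfl⟩
    by_cases hS : h ∈ G.sym S
    · have : Quot.mk (G.contrRel S) (G.ε h) = Quot.mk (G.contrRel S) (G.ε (G.ι h)) :=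
        Quot.sound ⟨h, hS, rfl, rfl⟩
      simp only [this]
    · have e1 := φ.hε ⟨h, hS⟩
      have e2 := φ.hε ⟨G.ι h, sym_iota_not_mem hS⟩
      have e3 := φ.hι ⟨h, hS⟩
      simp only at e1 e2 e3
      simp only [e1, e2, e3]
      exact Quot.sound ⟨(φ.fH ⟨h, hS⟩).1, (m.hmem ⟨h, hS⟩).1 h1, rfl, rfl⟩)

theorem descV_contrMap (φ : G.CIso S T) (m : φ.Matches S' T') (y : Quot (G.contrRel S)) :
    φ.descV m (contrMap m.hS y) = contrMap m.hT (φ.fV y) := by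
  induction y using Quot.ind
  rfl

theorem descV_symm (φ : G.CIso S T) (m : φ.Matches S' T') (x : Quot (G.contrRel S')) :
    φ.symm.descV m.symm (φ.descV m x) = x := by
  induction x using Quot.ind with
  | mk v =>
    have h1 : Quot.mk (G.contrRel S') v = contrMap m.hS (Quot.mk _ v) := rfl
    rw [h1, descV_contrMap, descV_contrMap _ m.symm]
    simp [CIso.symm]

/-- An isomorphism `Γ/S ≅ Γ/T` matching `S'` with `T'` descends to `Γ/S' ≅ Γ/T'`. -/
def desc (φ : G.CIso S T) (m : φ.Matches S' T') : G.CIso S' T' where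
  fV := ⟨φ.descV m, φ.symm.descV m.symm, φ.descV_symm m, φ.symm.descV_symm m.symm⟩
  fH :=
    { toFun := fun h => ⟨(φ.fH ⟨h.1, fun hc => h.2 (m.hS hc)⟩).1,
        fun hc => h.2 ((m.hmem ⟨h.1, fun hc => h.2 (m.hS hc)⟩).2 hc)⟩
      invFun := fun h => ⟨(φ.symm.fH ⟨h.1, fun hc => h.2 (m.hT hc)⟩).1,
        fun hc => h.2 ((m.symm.hmem ⟨h.1, fun hc => h.2 (m.hT hc)⟩).2 hc)⟩
      left_inv := fun h => by simp [CIso.symm]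
      right_inv := fun h => by simp [CIso.symm] }
  hι := fun h => φ.hι ⟨h.1, fun hc => h.2 (m.hS hc)⟩
  hε := fun h => congrArg (contrMap m.hT) (φ.hε ⟨h.1, fun hc => h.2 (m.hS hc)⟩)
  hleg := fun i => φ.hleg i

theorem desc_weight (φ : G.CIso S T) (m : φ.Matches S' T') (w : G.V → ℕ)
    (hw : ∀ y, G.cweight w T (φ.fV y) = G.cweight w S y) (x : Quot (G.contrRel S')) :
    G.cweight w T' ((φ.desc m).fV x) = G.cweight w S' x := by
  have := Fintype.ofFinite G.V
  have := Fintype.ofFinite G.H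
  have := Fintype.ofFinite (Quot (G.contrRel S))
  have := Fintype.ofFinite (Quot (G.contrRel T))
  have hx := cweight_trans G w m.hS x
  have hx' := cweight_trans G w m.hT ((φ.desc m).fV x)
  have hiff : ∀ y, contrMap m.hS y = x ↔ contrMap m.hT (φ.fV y) = (φ.desc m).fV x := by
    intro y
    rw [← descV_contrMap φ m]
    exact ((φ.desc m).fV.injective.eq_iff (a := contrMap m.hS y)).symm
  have hV : (Finset.univ.filter fun y => contrMap m.hS y = x).card =
      (Finset.univ.filter fun y => contrMap m.hT y = (φ.desc m).fV x).card :=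
    Finset.card_equiv φ.fV (by simpa using hiff)
  have hW : ∑ y with contrMap m.hS y = x, G.cweight w S y =
      ∑ y with contrMap m.hT y = (φ.desc m).fV x, G.cweight w T y :=
    Finset.sum_equiv φ.fV (by simpa using hiff) (fun y _ => (hw y).symm)
  have hH : (Finset.univ.filter fun h : {h : G.H // h ∉ G.sym S} =>
          h.1 ∈ G.sym S' ∧ Quot.mk (G.contrRel S') (G.ε h.1) = x).card =
      (Finset.univ.filter fun h : {h : G.H // h ∉ G.sym T} =>
          h.1 ∈ G.sym T' ∧ Quot.mk (G.contrRel T') (G.ε h.1) = (φ.desc m).fV x).card := by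
    refine Finset.card_equiv φ.fH fun h => ?_
    simp only [Finset.mem_filter, Finset.mem_univ, true_and]
    rw [m.hmem h]
    refine and_congr_right fun _ => ?_
    have h1 := hiff (Quot.mk _ (G.ε h.1))
    rw [φ.hε h] at h1
    exact h1
  omega

end CIso

end Isos

/-! ### The relation on the cube -/

section Relation

variable {n : ℕ}

theorem MIso.refl (G : LeggedGraph n) (w : G.V → ℕ) (l : G.H → ℝ≥0∞) : MIso G w l G w l :=
  ⟨Equiv.refl _, Equiv.refl _, fun _ => rfl, fun _ => rfl, fun _ => rfl, fun _ => rfl,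
    fun _ => rfl⟩

theorem MIso.symm {G G' : LeggedGraph n} {w : G.V → ℕ} {l : G.H → ℝ≥0∞} {w' : G'.V → ℕ}
    {l' : G'.H → ℝ≥0∞} (h : MIso G w l G' w' l') : MIso G' w' l' G w l := by
  obtain ⟨fV, fH, h1, h2, h3, h4, h5⟩ := h
  refine ⟨fV.symm, fH.symm, fun h => ?_, fun h => ?_, fun i => ?_, fun v => ?_, fun h => ?_⟩
  · rw [Equiv.symm_apply_eq, h1]; simp
  · rw [Equiv.symm_apply_eq, h2]; simp
  · rw [Equiv.symm_apply_eq, h3]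
  · rw [← h4]; simp
  · rw [← h5]; simp

theorem MIso.trans {G G' G'' : LeggedGraph n} {w : G.V → ℕ} {l : G.H → ℝ≥0∞} {w' : G'.V → ℕ}
    {l' : G'.H → ℝ≥0∞} {w'' : G''.V → ℕ} {l'' : G''.H → ℝ≥0∞} (h : MIso G w l G' w' l')
    (k : MIso G' w' l' G'' w'' l'') : MIso G w l G'' w'' l'' := by
  obtain ⟨fV, fH, h1, h2, h3, h4, h5⟩ := h
  obtain ⟨gV, gH, k1, k2, k3, k4, k5⟩ := k
  exact ⟨fV.trans gV, fH.trans gH, fun h => by simp [h1, k1], fun h => by simp [h2, k2],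
    fun i => by simp [h3, k3], fun v => by simp [h4, k4], fun h => by simp [h5, k5]⟩

theorem ptRel_equivalence (G : LeggedGraph n) (w : G.V → ℕ) : Equivalence (G.ptRel w) :=
  ⟨fun _ => MIso.refl _ _ _, MIso.symm, MIso.trans⟩

theorem mem_sym_zeroSet {G : LeggedGraph n} {p : G.Edge → ℝ≥0∞} {h : G.H} :
    h ∈ G.sym (G.zeroSet p) ↔ ∃ hne : G.ι h ≠ h, p (G.edgeMk h hne) = 0 := by
  constructor
  · rintro ⟨h1 | ⟨hne', h1⟩, hne⟩
    · exact h1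
    · exact ⟨hne, by rw [edgeMk_iota hne hne' rfl]; exact h1⟩
  · intro h1
    exact ⟨Or.inl h1, h1.1⟩

theorem assocLen_of_fixed {G : LeggedGraph n} {p : G.Edge → ℝ≥0∞}
    (h : {h : G.H // h ∉ G.sym (G.zeroSet p)}) (hf : G.ι h.1 = h.1) : G.assocLen p h = ⊤ :=
  dif_pos hf

theorem assocLen_of_ne {G : LeggedGraph n} {p : G.Edge → ℝ≥0∞}
    (h : {h : G.H // h ∉ G.sym (G.zeroSet p)}) (hne : G.ι h.1 ≠ h.1) :
    G.assocLen p h = p (G.edgeMk h.1 hne) :=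
  dif_neg hne

/-- The closed condition on `(p, q)` attached to an isomorphism `φ : Γ/S ≅ Γ/T`: the edges
of `S` and `T` have length `0` in `p` and `q`, and `φ` preserves all lengths, which may be
`0` as well. -/
structure Compat {G : LeggedGraph n} {S T : Set G.H} (φ : G.CIso S T)
    (p q : G.Edge → ℝ≥0∞) : Prop where
  hp : ∀ (h : G.H) (hne : G.ι h ≠ h), h ∈ G.sym S → p (G.edgeMk h hne) = 0
  hq : ∀ (h : G.H) (hne : G.ι h ≠ h), h ∈ G.sym T → q (G.edgeMk h hne) = 0
  hlen : ∀ (h : {h : G.H // h ∉ G.sym S}) (hne : G.ι h.1 ≠ h.1)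
    (hne' : G.ι (φ.fH h).1 ≠ (φ.fH h).1), q (G.edgeMk _ hne') = p (G.edgeMk _ hne)

theorem CIso.fixed_iff {G : LeggedGraph n} {S T : Set G.H} (φ : G.CIso S T)
    (h : {h : G.H // h ∉ G.sym S}) : G.ι (φ.fH h).1 = (φ.fH h).1 ↔ G.ι h.1 = h.1 := by
  rw [← φ.hι, ← Subtype.ext_iff, φ.fH.apply_eq_iff_eq, Subtype.ext_iff]

theorem Compat.matches {G : LeggedGraph n} {S T : Set G.H} {φ : G.CIso S T}
    {p q : G.Edge → ℝ≥0∞} (c : Compat φ p q) : φ.Matches (G.zeroSet p) (G.zeroSet q) where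
  hS := fun h hh => mem_sym_zeroSet.2 ⟨hh.2, c.hp h hh.2 hh⟩
  hT := fun h hh => mem_sym_zeroSet.2 ⟨hh.2, c.hq h hh.2 hh⟩
  hmem := fun h => by
    rw [mem_sym_zeroSet, mem_sym_zeroSet]
    constructor
    · rintro ⟨hne, h0⟩
      have hne' := fun hc => hne ((φ.fixed_iff h).1 hc)
      exact ⟨hne', by rw [c.hlen h hne hne', h0]⟩
    · rintro ⟨hne', h0⟩
      have hne := fun hc => hne' ((φ.fixed_iff h).2 hc)
      exact ⟨hne, by rw [← c.hlen h hne hne', h0]⟩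

/-- A pair in the closed piece attached to a weighted isomorphism `Γ/S ≅ Γ/T` is related,
even when further edges of `p` and `q` degenerate to length `0`. -/
theorem Compat.ptRel {G : LeggedGraph n} {w : G.V → ℕ} {S T : Set G.H} {φ : G.CIso S T}
    {p q : G.Edge → ℝ≥0∞} (c : Compat φ p q)
    (hw : ∀ y, G.cweight w T (φ.fV y) = G.cweight w S y) : G.ptRel w p q := by
  let ψ := φ.desc c.matches
  refine ⟨ψ.fV, ψ.fH, fun h => Subtype.ext (ψ.hι h), fun h => ψ.hε h,
    fun i => Subtype.ext (ψ.hleg i), fun x => φ.desc_weight c.matches w hw x, fun h => ?_⟩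
  by_cases hne : G.ι h.1 = h.1
  · exact (assocLen_of_fixed (ψ.fH h) ((ψ.fixed_iff h).2 hne)).trans (assocLen_of_fixed h hne).symm
  · have hne' : ¬ G.ι (ψ.fH h).1 = (ψ.fH h).1 := fun hc => hne ((ψ.fixed_iff h).1 hc)
    exact ((assocLen_of_ne (ψ.fH h) hne').trans
      (c.hlen ⟨h.1, fun hc => h.2 (c.matches.hS hc)⟩ hne hne')).trans
        (assocLen_of_ne h hne).symm

theorem ptRel_iff (G : LeggedGraph n) (w : G.V → ℕ) (p q : G.Edge → ℝ≥0∞) :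
    G.ptRel w p q ↔ ∃ (S T : Set G.H) (φ : G.CIso S T),
      (∀ y, G.cweight w T (φ.fV y) = G.cweight w S y) ∧ Compat φ p q := by
  constructor
  · rintro ⟨fV, fH, h1, h2, h3, h4, h5⟩
    let φ : G.CIso (G.zeroSet p) (G.zeroSet q) :=
      { fV := fV, fH := fH
        hι := fun h => congrArg Subtype.val (h1 h)
        hε := h2
        hleg := fun i => congrArg Subtype.val (h3 i) }
    refine ⟨_, _, φ, h4, ?_, ?_, ?_⟩
    · intro h hne hh
      exact (mem_sym_zeroSet.1 hh).2
    · intro h hne hh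
      exact (mem_sym_zeroSet.1 hh).2
    · intro h hne hne'
      have := h5 h
      unfold assocLen at this
      rw [dif_neg hne] at this
      exact (dif_neg hne').symm.trans this
  · rintro ⟨S, T, φ, hw, c⟩
    exact c.ptRel hw

theorem isClosed_compat {G : LeggedGraph n} {S T : Set G.H} (φ : G.CIso S T) :
    IsClosed {x : (G.Edge → ℝ≥0∞) × (G.Edge → ℝ≥0∞) | Compat φ x.1 x.2} := by
  have : {x : (G.Edge → ℝ≥0∞) × (G.Edge → ℝ≥0∞) | Compat φ x.1 x.2} =
      {x | ∀ (h : G.H) (hne : G.ι h ≠ h), h ∈ G.sym S → x.1 (G.edgeMk h hne) = 0} ∩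
      ({x | ∀ (h : G.H) (hne : G.ι h ≠ h), h ∈ G.sym T → x.2 (G.edgeMk h hne) = 0} ∩
      {x | ∀ (h : {h : G.H // h ∉ G.sym S}) (hne : G.ι h.1 ≠ h.1)
        (hne' : G.ι (φ.fH h).1 ≠ (φ.fH h).1),
        x.2 (G.edgeMk _ hne') = x.1 (G.edgeMk _ hne)}) :=
    Set.ext fun x => ⟨fun c => ⟨c.1, c.2, c.3⟩, fun c => ⟨c.1, c.2.1, c.2.2⟩⟩
  rw [this]
  refine IsClosed.inter ?_ (IsClosed.inter ?_ ?_) <;> simp only [Set.ofPred_forall] <;>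
    refine isClosed_iInter fun _ => isClosed_iInter fun _ => isClosed_iInter fun _ =>
      isClosed_eq ?_ ?_ <;> fun_prop

theorem isClosed_ptRel (G : LeggedGraph n) (w : G.V → ℕ) :
    IsClosed {x : (G.Edge → ℝ≥0∞) × (G.Edge → ℝ≥0∞) | G.ptRel w x.1 x.2} := by
  simp only [ptRel_iff, Set.ofPred_exists, Set.ofPred_and]
  exact isClosed_iUnion_of_finite fun S => isClosed_iUnion_of_finite fun T =>
    isClosed_iUnion_of_finite fun φ => isClosed_const.inter (isClosed_compat φ)

end Relation

/-! ### Quotients of compact Hausdorff spaces by closed relations -/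

/-- The quotient of a compact Hausdorff space by a closed equivalence relation is Hausdorff:
the quotient map is closed, since saturations of closed sets are projections of compact sets,
and disjoint closed fibers can be separated by normality. -/
theorem t2Space_quot_of_isClosed {X : Type*} [TopologicalSpace X] [CompactSpace X] [T2Space X]
    {r : X → X → Prop} (hr : Equivalence r) (hc : IsClosed {x : X × X | r x.1 x.2}) :
    T2Space (Quot r) := by
  have hmk : ∀ a b, Quot.mk r a = Quot.mk r b ↔ r a b := fun a b =>
    ⟨fun h => (hr.eqvGen_iff).1 (Quot.eqvGen_exact h), fun h => Quot.sound h⟩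
  have hq : Topology.IsQuotientMap (Quot.mk r) := isQuotientMap_quot_mk
  have hclosed : IsClosedMap (Quot.mk r) := by
    intro C hC
    rw [← hq.isClosed_preimage]
    have : Quot.mk r ⁻¹' (Quot.mk r '' C) =
        Prod.snd '' ({x : X × X | r x.1 x.2} ∩ Prod.fst ⁻¹' C) := by
      ext b
      constructor
      · rintro ⟨a, ha, hab⟩
        exact ⟨(a, b), ⟨(hmk a b).1 hab, ha⟩, rfl⟩
      · rintro ⟨⟨a, b'⟩, ⟨h1, h2⟩, rfl⟩
        exact ⟨a, h2, (hmk a b').2 h1⟩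
    rw [this]
    exact ((hc.inter (hC.preimage continuous_fst)).isCompact.image continuous_snd).isClosed
  refine ⟨fun x y hxy => ?_⟩
  have hcl : ∀ z : Quot r, IsClosed (Quot.mk r ⁻¹' {z}) := by
    intro z
    obtain ⟨a, rfl⟩ := Quot.exists_rep z
    have : IsClosed (Quot.mk r '' {a}) := hclosed _ isClosed_singleton
    rw [Set.image_singleton] at this
    exact this.preimage hq.continuous
  obtain ⟨U, V, hU, hV, hxU, hyV, hUV⟩ := normal_separation (hcl x) (hcl y)
    (Disjoint.preimage _ (Set.disjoint_singleton.2 hxy))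
  -- The points whose whole fiber lies in `U`, respectively `V`, form open sets.
  refine ⟨(Quot.mk r '' Uᶜ)ᶜ, (Quot.mk r '' Vᶜ)ᶜ, (hclosed _ hU.isClosed_compl).isOpen_compl,
    (hclosed _ hV.isClosed_compl).isOpen_compl, ?_, ?_, ?_⟩
  · rintro ⟨a, ha, rfl⟩; exact ha (hxU rfl)
  · rintro ⟨a, ha, rfl⟩; exact ha (hyV rfl)
  · rw [Set.disjoint_left]
    intro z hz hz'
    obtain ⟨a, rfl⟩ := Quot.exists_rep z
    have ha : a ∈ U := by_contra fun h => hz ⟨a, h, rfl⟩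
    have ha' : a ∈ V := by_contra fun h => hz' ⟨a, h, rfl⟩
    exact Set.disjoint_left.1 hUV ha ha'

end LeggedGraph

theorem stmt_17 (g n : ℕ) (G : LeggedGraph n) (w : G.V → ℕ)
    (hconn : G.IsConnected) (hstab : G.Stable w) (hgen : G.genus w = g) :
    CompactSpace (Quot (G.ptRel w)) ∧ T2Space (Quot (G.ptRel w)) :=
  ⟨inferInstance, t2Space_quot_of_isClosed (ptRel_equivalence G w) (isClosed_ptRel G w)⟩
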